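/- arXiv:2104.12066 — 2 statements merged into one kernel-verified Lean document; each statement's English description precedes it below -/
import Mathlib

section
/- If Q is a prefix-free set of strings with μ(⟦Q⟧) < 1, then the set ⋂_{n ≥ 1} ⟦Q^n⟧ is μ-null. -/
open MeasureTheory

/-- The first `n` bits of `x ∈ 2^ω`, as a string. -/
def seg (x : ℕ → Bool) (n : ℕ) : List Bool := List.ofFn (fun i : Fin n => x i)

/-- The cylinder of a string: all `x ∈ 2^ω` with `σ` as a prefix. -/
def cyl (σ : List Bool) : Set (ℕ → Bool) := {x | seg x σ.length = σ}

/-- The open set generated by a set of strings. -/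
def cylSet (V : Set (List Bool)) : Set (ℕ → Bool) := ⋃ σ ∈ V, cyl σ

/-- Concatenation of sets of strings: `Q∗R = {σ ++ ρ : σ ∈ Q, ρ ∈ R}`. -/
def starSet (Q R : Set (List Bool)) : Set (List Bool) :=
  {l | ∃ σ ∈ Q, ∃ ρ ∈ R, l = σ ++ ρ}

/-- Iterated concatenation: `Q^1 = Q`, `Q^{n+1} = Q^n ∗ Q`
(with `Q^0 = {[]}`, the empty string). -/
def powSet (Q : Set (List Bool)) : ℕ → Set (List Bool)
  | 0 => {[]}
  | n + 1 => starSet (powSet Q n) Q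

/-!
Countable subadditivity bounds the measure of `⟦V⟧` by the sum of the measures of the cylinders
of `V`, with equality when `V` is prefix-free. That sum is submultiplicative under concatenation,
so `μ ⟦Q ^ n⟧ ≤ (μ ⟦Q⟧) ^ n`, which tends to `0`.
-/

lemma tsum_starSet_le {w : List Bool → ENNReal} (hw : ∀ σ ρ, w (σ ++ ρ) ≤ w σ * w ρ)
    (Q R : Set (List Bool)) :
    ∑' l : starSet Q R, w l ≤ (∑' σ : Q, w σ) * ∑' ρ : R, w ρ := by
  have starSet_eq_biUnion : starSet Q R = ⋃ σ ∈ Q, (σ ++ ·) '' R := by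
    ext l
    simp [starSet, eq_comm]
  calc ∑' l : starSet Q R, w l
      ≤ ∑' σ : Q, ∑' l : (σ.1 ++ ·) '' R, w l :=
        starSet_eq_biUnion ▸ ENNReal.tsum_biUnion_le_tsum w Q fun σ => (σ ++ ·) '' R
    _ = ∑' σ : Q, ∑' ρ : R, w (σ ++ ρ) :=
        tsum_congr fun σ => tsum_image w (List.append_right_injective σ.1).injOn
    _ ≤ ∑' σ : Q, ∑' ρ : R, w σ * w ρ := by
        gcongr
        exact hw _ _
    _ = (∑' σ : Q, w σ) * ∑' ρ : R, w ρ := by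
        simp only [ENNReal.tsum_mul_left, ENNReal.tsum_mul_right]

lemma tsum_powSet_succ_le {w : List Bool → ENNReal} (hw : ∀ σ ρ, w (σ ++ ρ) ≤ w σ * w ρ)
    (Q : Set (List Bool)) (n : ℕ) :
    ∑' l : powSet Q (n + 1), w l ≤ (∑' σ : Q, w σ) ^ (n + 1) := by
  induction n with
  | zero =>
    have powSet_one : powSet Q 1 = Q := by simp [powSet, starSet]
    rw [zero_add, powSet_one, pow_one]
  | succ n ih =>
    calc ∑' l : powSet Q (n + 2), w l
        ≤ (∑' l : powSet Q (n + 1), w l) * ∑' σ : Q, w σ := tsum_starSet_le hw _ Q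
      _ ≤ (∑' σ : Q, w σ) ^ (n + 1) * ∑' σ : Q, w σ := by gcongr
      _ = (∑' σ : Q, w σ) ^ (n + 2) := (pow_succ _ _).symm

lemma measurableSet_cyl (σ : List Bool) : MeasurableSet (cyl σ) := by
  have measurable_restrict : Measurable fun (x : ℕ → Bool) (i : Fin σ.length) => x i := by
    fun_prop
  exact measurable_restrict (.of_discrete (s := {v | List.ofFn v = σ}))

lemma seg_isPrefix_seg (x : ℕ → Bool) {m n : ℕ} (h : m ≤ n) : seg x m <+: seg x n :=
  List.prefix_iff_getElem.2 ⟨by simpa [seg] using h, by simp [seg]⟩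

lemma isPrefix_of_mem_cyl {x : ℕ → Bool} {σ τ : List Bool} (hσ : x ∈ cyl σ) (hτ : x ∈ cyl τ)
    (h : σ.length ≤ τ.length) : σ <+: τ := by
  have hpre := seg_isPrefix_seg x h
  rwa [show seg x σ.length = σ from hσ, show seg x τ.length = τ from hτ] at hpre

lemma pairwiseDisjoint_cyl {Q : Set (List Bool)} (hQ : IsAntichain (· <+: ·) Q) :
    Q.PairwiseDisjoint cyl := by
  intro σ hσ τ hτ hne
  refine Set.disjoint_left.2 fun x hxσ hxτ => ?_
  rcases le_total σ.length τ.length with h | h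
  · exact hQ hσ hτ hne (isPrefix_of_mem_cyl hxσ hxτ h)
  · exact hQ hτ hσ hne.symm (isPrefix_of_mem_cyl hxτ hxσ h)

section Measure

variable {μ : Measure (ℕ → Bool)} {Q : Set (List Bool)}

lemma measure_cylSet_le_tsum (μ : Measure (ℕ → Bool)) (V : Set (List Bool)) :
    μ (cylSet V) ≤ ∑' σ : V, μ (cyl σ) :=
  measure_biUnion_le μ V.to_countable cyl

lemma measure_cylSet_eq_tsum (μ : Measure (ℕ → Bool)) (hQ : IsAntichain (· <+: ·) Q) :
    μ (cylSet Q) = ∑' σ : Q, μ (cyl σ) :=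
  measure_biUnion Q.to_countable (pairwiseDisjoint_cyl hQ) fun σ _ => measurableSet_cyl σ

lemma measure_cylSet_powSet_succ_le
    (hμ : ∀ σ ρ, μ (cyl (σ ++ ρ)) ≤ μ (cyl σ) * μ (cyl ρ))
    (hQ : IsAntichain (· <+: ·) Q) (n : ℕ) :
    μ (cylSet (powSet Q (n + 1))) ≤ μ (cylSet Q) ^ (n + 1) :=
  calc μ (cylSet (powSet Q (n + 1)))
      ≤ ∑' l : powSet Q (n + 1), μ (cyl l) := measure_cylSet_le_tsum μ _
    _ ≤ (∑' σ : Q, μ (cyl σ)) ^ (n + 1) := tsum_powSet_succ_le hμ Q n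
    _ = μ (cylSet Q) ^ (n + 1) := by rw [measure_cylSet_eq_tsum μ hQ]

/-- Beyond the fair coin, this covers every Bernoulli measure, for which `hμ` is an equality. -/
theorem inter_powSet_null_general
    (hμ : ∀ σ ρ, μ (cyl (σ ++ ρ)) ≤ μ (cyl σ) * μ (cyl ρ))
    (hQ : IsAntichain (· <+: ·) Q) (hlt : μ (cylSet Q) < 1) :
    μ (⋂ n : ℕ, cylSet (powSet Q (n + 1))) = 0 := by
  have measure_inter_le (n : ℕ) :
      μ (⋂ n : ℕ, cylSet (powSet Q (n + 1))) ≤ μ (cylSet Q) ^ (n + 1) :=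
    (measure_mono (Set.iInter_subset _ n)).trans (measure_cylSet_powSet_succ_le hμ hQ n)
  have pow_tendsto_zero :=
    (ENNReal.tendsto_pow_atTop_nhds_zero_of_lt_one hlt).comp (Filter.tendsto_add_atTop_nat 1)
  exact nonpos_iff_eq_zero.1 (ge_of_tendsto' pow_tendsto_zero measure_inter_le)

end Measure

/-- If `Q` is a prefix-free set of strings with `μ(⟦Q⟧) < 1`, then
`⋂_{n ≥ 1} ⟦Q^n⟧` is `μ`-null, where `μ` is the fair-coin measure on `2^ω`
(characterized by its values on cylinders). -/
theorem inter_powSet_null (μ : Measure (ℕ → Bool))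
    (hμ : ∀ σ : List Bool, μ (cyl σ) = (2 : ENNReal)⁻¹ ^ σ.length)
    (Q : Set (List Bool))
    (hQ : ∀ σ ∈ Q, ∀ τ ∈ Q, σ <+: τ → σ = τ)
    (hlt : μ (cylSet Q) < 1) :
    μ (⋂ n : ℕ, cylSet (powSet Q (n + 1))) = 0 := by
  exact inter_powSet_null_general (fun σ ρ => by simp [hμ, pow_add])
    (fun σ hσ τ hτ hne hpre => hne (hQ σ hσ τ hτ hpre)) hlt
end

section
/- Every forcing condition p = (F_p, T_p, d_p) can be extended to a forcing condition q = (F_q, T_q, d_q) such that every string in F_p has at least two incomparable extensions in F_q. -/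
open MeasureTheory

/-- A tree: a set of strings closed under prefixes. -/
def IsTree (T : Set (List Bool)) : Prop :=
  ∀ σ ∈ T, ∀ τ : List Bool, τ <+: σ → τ ∈ T

/-- The paths of a tree: those `x ∈ 2^ω` all of whose prefixes are in `T`. -/
def paths (T : Set (List Bool)) : Set (ℕ → Bool) := {x | ∀ n, seg x n ∈ T}

/-- Relative measure: `μ_τ(A) = 2^{|τ|} · μ(A ∩ ⟦τ⟧)`. -/
noncomputable def relMeasure (μ : Measure (ℕ → Bool)) (τ : List Bool)
    (A : Set (ℕ → Bool)) : ℝ :=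
  2 ^ τ.length * (μ (A ∩ cyl τ)).toReal

/-- A tree is strongly positive if `μ_σ([T]) > 0` for every `σ ∈ T`. -/
def StronglyPositive (μ : Measure (ℕ → Bool)) (T : Set (List Bool)) : Prop :=
  ∀ σ ∈ T, 0 < relMeasure μ σ (paths T)

/-- A lower density function: a nonnegative rational-valued function on a
finite nonempty domain of strings of equal length. -/
structure LDF where
  dom : Finset (List Bool)
  val : List Bool → ℚ
  dom_nonempty : dom.Nonempty
  nonneg : ∀ σ ∈ dom, 0 ≤ val σ
  eq_length : ∀ σ ∈ dom, ∀ τ ∈ dom, σ.length = τ.length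

/-- `e` extends `d`: every element of `⟨e⟩` extends an element of `⟨d⟩`,
every element of `⟨d⟩` has an extension in `⟨e⟩`, and for each `σ ∈ ⟨d⟩`,
`d(σ)·2^{-|σ|} ≤ Σ_{τ ∈ ⟨e⟩, σ ⊑ τ} e(τ)·2^{-|τ|}`. -/
def LDF.Extends (e d : LDF) : Prop :=
  (∀ τ ∈ e.dom, ∃ σ ∈ d.dom, σ <+: τ) ∧
  (∀ σ ∈ d.dom, ∃ τ ∈ e.dom, σ <+: τ) ∧
  ∀ σ ∈ d.dom, d.val σ * (2 : ℚ)⁻¹ ^ σ.length ≤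
    ∑ τ ∈ e.dom.filter (fun τ => σ <+: τ), e.val τ * (2 : ℚ)⁻¹ ^ τ.length

/-- A tree `T` is `d`-dense: `⟨d⟩` is the full level of `T` at the common
length of `⟨d⟩`, and for some rational `ε > 0`, `d(σ) + ε ≤ μ_σ([T])` for
each `σ ∈ ⟨d⟩`. -/
def LDF.DenseIn (d : LDF) (μ : Measure (ℕ → Bool)) (T : Set (List Bool)) : Prop :=
  ∃ ε : ℚ, 0 < ε ∧ (∃ l : ℕ, ∀ σ : List Bool, σ ∈ d.dom ↔ (σ ∈ T ∧ σ.length = l)) ∧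
    ∀ σ ∈ d.dom, (d.val σ : ℝ) + (ε : ℝ) ≤ relMeasure μ σ (paths T)

/-- A forcing condition `(F_p, T_p, d_p)`: a lower density function `d`
(whose domain is `F`), together with an infinite, `d`-dense, strongly
positive tree `T`. -/
structure Cond (μ : Measure (ℕ → Bool)) where
  d : LDF
  T : Set (List Bool)
  tree : IsTree T
  infinite : T.Infinite
  dense : d.DenseIn μ T
  strongPos : StronglyPositive μ T

/-- `q` extends `p`: `d_q` extends `d_p` and `T_q ⊆ T_p`. -/
def Cond.Extends {μ : Measure (ℕ → Bool)} (q p : Cond μ) : Prop :=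
  q.d.Extends p.d ∧ q.T ⊆ p.T

/-!
The tree is left unchanged and only the level at which densities are recorded is raised. A set of
positive measure for an atomless measure has two distinct points, so above each `σ ∈ F_p` two paths
of `T_p` separate, and from some level on they pass through incomparable strings. Raising the level
costs no density: the mass of `[T_p]` above `σ` is at most the sum of its masses above the
extensions of `σ` at the new level, and rational values close enough to the new densities lose in
total at most the slack `ε` of `p`.
-/

open Filter Topology

section Strings

variable {x y : ℕ → Bool} {σ : List Bool} {m n : ℕ}

theorem length_seg (x : ℕ → Bool) (n : ℕ) : (seg x n).length = n :=
  List.length_ofFn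

theorem seg_eq_seg_iff : seg x n = seg y n ↔ ∀ i < n, x i = y i := by
  simp only [seg, List.ofFn_inj, funext_iff, Fin.forall_iff]

theorem seg_prefix_seg (x : ℕ → Bool) (h : m ≤ n) : seg x m <+: seg x n := by
  rw [List.prefix_iff_eq_take, length_seg]
  exact Fin.ofFn_take_eq_take_ofFn h fun i : Fin n => x i

theorem eventually_seg_ne (h : x ≠ y) : ∀ᶠ n in atTop, seg x n ≠ seg y n := by
  obtain ⟨i, hi⟩ := Function.ne_iff.1 h
  filter_upwards [eventually_gt_atTop i] with n hn heq
  exact hi (seg_eq_seg_iff.1 heq i hn)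

theorem mem_cyl_seg (x : ℕ → Bool) (n : ℕ) : x ∈ cyl (seg x n) :=
  congrArg (seg x) (length_seg x n)

theorem cyl_nil : cyl [] = Set.univ :=
  Set.eq_univ_of_forall fun x => mem_cyl_seg x 0

theorem prefix_seg_of_mem_cyl (hx : x ∈ cyl σ) (hn : σ.length ≤ n) : σ <+: seg x n :=
  Set.mem_ofPred.1 hx ▸ seg_prefix_seg x hn

theorem nullSingletonClass_of_measure_cyl {μ : Measure (ℕ → Bool)}
    (hμ : ∀ σ : List Bool, μ (cyl σ) = (2 : ENNReal)⁻¹ ^ σ.length) : NullSingletonClass μ where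
  measure_singleton x := by
    have measure_le (n : ℕ) : μ {x} ≤ (2 : ENNReal)⁻¹ ^ n := by
      calc μ {x} ≤ μ (cyl (seg x n)) :=
            measure_mono (Set.singleton_subset_iff.2 (mem_cyl_seg x n))
        _ = (2 : ENNReal)⁻¹ ^ n := by rw [hμ, length_seg]
    have tendsto_zero : Tendsto (fun n : ℕ => (2 : ENNReal)⁻¹ ^ n) atTop (𝓝 0) :=
      ENNReal.tendsto_pow_atTop_nhds_zero_of_lt_one (by simp)
    exact le_antisymm (ge_of_tendsto' tendsto_zero measure_le) zero_le

end Strings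

/-- The level `T ∩ 2^n` of a set of strings, as a finset so that it can serve as the domain of a
lower density function. -/
noncomputable def level (T : Set (List Bool)) (n : ℕ) : Finset (List Bool) :=
  ((List.finite_length_eq Bool n).inter_of_right T).toFinset

section Levels

variable {μ : Measure (ℕ → Bool)} {T : Set (List Bool)} {x : ℕ → Bool} {σ : List Bool} {n : ℕ}

theorem mem_level : σ ∈ level T n ↔ σ ∈ T ∧ σ.length = n := by
  simp [level]

theorem seg_mem_level (hx : x ∈ paths T) (n : ℕ) : seg x n ∈ level T n :=
  mem_level.2 ⟨hx n, length_seg x n⟩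

theorem paths_inter_cyl_subset_biUnion (hn : σ.length ≤ n) :
    paths T ∩ cyl σ ⊆ ⋃ τ ∈ (level T n).filter (σ <+: ·), paths T ∩ cyl τ := by
  rintro x ⟨hxT, hxσ⟩
  exact Set.mem_biUnion (x := seg x n)
    (Finset.mem_filter.2 ⟨seg_mem_level hxT n, prefix_seg_of_mem_cyl hxσ hn⟩)
    ⟨hxT, mem_cyl_seg x n⟩

theorem relMeasure_mul_inv_two_pow (μ : Measure (ℕ → Bool)) (σ : List Bool)
    (A : Set (ℕ → Bool)) :
    relMeasure μ σ A * (2 : ℝ)⁻¹ ^ σ.length = μ.real (A ∩ cyl σ) := by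
  rw [relMeasure, Measure.real, inv_pow]
  field_simp

theorem relMeasure_mul_inv_two_pow_le_sum (hT : μ (paths T) ≠ ⊤) (hn : σ.length ≤ n) :
    relMeasure μ σ (paths T) * (2 : ℝ)⁻¹ ^ σ.length ≤
      ∑ τ ∈ (level T n).filter (σ <+: ·),
        relMeasure μ τ (paths T) * (2 : ℝ)⁻¹ ^ τ.length := by
  simp only [relMeasure_mul_inv_two_pow]
  have union_subset :
      ⋃ τ ∈ (level T n).filter (σ <+: ·), paths T ∩ cyl τ ⊆ paths T :=
    Set.iUnion₂_subset fun τ _ => Set.inter_subset_left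
  exact (measureReal_mono (paths_inter_cyl_subset_biUnion hn)
    (measure_ne_top_of_subset union_subset hT)).trans (measureReal_biUnion_finset_le _ _)

theorem sum_mul_inv_two_pow_length_le {s : Finset (List Bool)} {g : List Bool → ℝ}
    (hg : ∀ τ ∈ s, 0 ≤ g τ) (hn : ∀ τ ∈ s, n ≤ τ.length) :
    ∑ τ ∈ s, g τ * (2 : ℝ)⁻¹ ^ τ.length ≤ (∑ τ ∈ s, g τ) * (2 : ℝ)⁻¹ ^ n := by
  rw [Finset.sum_mul]
  exact Finset.sum_le_sum fun τ hτ => mul_le_mul_of_nonneg_left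
    (pow_le_pow_of_le_one (by norm_num) (by norm_num) (hn τ hτ)) (hg τ hτ)

theorem mul_inv_two_pow_le_sum_level_of_sum_sub_le (hT : μ (paths T) ≠ ⊤) (hn : σ.length ≤ n)
    {a ε : ℚ} (ha : (a : ℝ) + ε ≤ relMeasure μ σ (paths T)) {v : List Bool → ℚ}
    (hv : ∀ τ ∈ level T n, (v τ : ℝ) ≤ relMeasure μ τ (paths T))
    (hloss : ∑ τ ∈ level T n, (relMeasure μ τ (paths T) - v τ) ≤ ε) :
    a * (2 : ℚ)⁻¹ ^ σ.length ≤
      ∑ τ ∈ (level T n).filter (σ <+: ·), v τ * (2 : ℚ)⁻¹ ^ τ.length := by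
  set S := (level T n).filter (σ <+: ·)
  set density : List Bool → ℝ := fun τ => relMeasure μ τ (paths T)
  have loss_le : ∑ τ ∈ S, (density τ - v τ) * (2 : ℝ)⁻¹ ^ τ.length ≤ ε * (2 : ℝ)⁻¹ ^ σ.length :=
    calc ∑ τ ∈ S, (density τ - v τ) * (2 : ℝ)⁻¹ ^ τ.length
        ≤ (∑ τ ∈ S, (density τ - v τ)) * (2 : ℝ)⁻¹ ^ σ.length :=
          sum_mul_inv_two_pow_length_le
            (fun τ hτ => sub_nonneg.2 (hv τ (Finset.mem_filter.1 hτ).1))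
            (fun τ hτ => (Finset.mem_filter.1 hτ).2.length_le)
      _ ≤ ε * (2 : ℝ)⁻¹ ^ σ.length := by
          gcongr
          exact (Finset.sum_le_sum_of_subset_of_nonneg (Finset.filter_subset _ _)
            fun τ hτ _ => sub_nonneg.2 (hv τ hτ)).trans hloss
  rw [← Rat.cast_le (K := ℝ)]
  push_cast
  calc (a : ℝ) * (2 : ℝ)⁻¹ ^ σ.length
      ≤ (density σ - ε) * (2 : ℝ)⁻¹ ^ σ.length := by gcongr; exact le_sub_iff_add_le.2 ha
    _ = density σ * (2 : ℝ)⁻¹ ^ σ.length - ε * (2 : ℝ)⁻¹ ^ σ.length := sub_mul ..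
    _ ≤ ∑ τ ∈ S, density τ * (2 : ℝ)⁻¹ ^ τ.length -
          ∑ τ ∈ S, (density τ - v τ) * (2 : ℝ)⁻¹ ^ τ.length :=
        sub_le_sub (relMeasure_mul_inv_two_pow_le_sum hT hn) loss_le
    _ = ∑ τ ∈ S, (v τ : ℝ) * (2 : ℝ)⁻¹ ^ τ.length := by
        rw [← Finset.sum_sub_distrib]
        exact Finset.sum_congr rfl fun τ _ => by ring

theorem eventually_exists_incomparable_mem_level [NullSingletonClass μ]
    (hσ : μ (paths T ∩ cyl σ) ≠ 0) :
    ∀ᶠ n in atTop, ∃ τ₁ ∈ level T n, ∃ τ₂ ∈ level T n,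
      σ <+: τ₁ ∧ σ <+: τ₂ ∧ ¬ τ₁ <+: τ₂ ∧ ¬ τ₂ <+: τ₁ := by
  obtain ⟨x, ⟨hxT, hxσ⟩, y, ⟨hyT, hyσ⟩, hxy⟩ : (paths T ∩ cyl σ).Nontrivial :=
    Set.not_subsingleton_iff.1 fun h => hσ (h.measure_zero μ)
  filter_upwards [eventually_ge_atTop σ.length, eventually_seg_ne hxy] with n hn hne
  have same_length : (seg x n).length = (seg y n).length := by simp only [length_seg]
  exact ⟨seg x n, seg_mem_level hxT n, seg y n, seg_mem_level hyT n,
    prefix_seg_of_mem_cyl hxσ hn, prefix_seg_of_mem_cyl hyσ hn,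
    fun h => hne (h.eq_of_length same_length),
    fun h => hne (h.eq_of_length same_length.symm).symm⟩

end Levels

namespace StronglyPositive

variable {μ : Measure (ℕ → Bool)} {T : Set (List Bool)} {σ : List Bool}

theorem measureReal_pos (hT : StronglyPositive μ T) (hσ : σ ∈ T) :
    0 < μ.real (paths T ∩ cyl σ) :=
  pos_of_mul_pos_right (hT σ hσ) (by positivity)

theorem measure_ne_zero (hT : StronglyPositive μ T) (hσ : σ ∈ T) : μ (paths T ∩ cyl σ) ≠ 0 :=
  fun h => (hT.measureReal_pos hσ).ne' (by rw [Measure.real, h, ENNReal.toReal_zero])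

-- Positivity gives finiteness, because `relMeasure` sends infinite measure to `0`.
theorem measure_paths_ne_top (hT : StronglyPositive μ T) (hroot : [] ∈ T) :
    μ (paths T) ≠ ⊤ := by
  have root_pos := hT.measureReal_pos hroot
  rw [cyl_nil, Set.inter_univ] at root_pos
  exact (ENNReal.toReal_pos_iff.1 root_pos).2.ne

theorem exists_prefix_mem_level (hT : StronglyPositive μ T) (hσ : σ ∈ T) {n : ℕ}
    (hn : σ.length ≤ n) : ∃ τ ∈ level T n, σ <+: τ := by
  obtain ⟨x, hxT, hxσ⟩ := nonempty_of_measure_ne_zero (hT.measure_ne_zero hσ)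
  exact ⟨seg x n, seg_mem_level hxT n, prefix_seg_of_mem_cyl hxσ hn⟩

end StronglyPositive

section RationalApproximation

variable {ι : Type*} (s : Finset ι) {f : ι → ℝ}

theorem exists_pos_rat_forall_lt (hf : ∀ i ∈ s, 0 < f i) :
    ∃ ε : ℚ, 0 < ε ∧ ∀ i ∈ s, (ε : ℝ) < f i := by
  have eventually_lt : ∀ᶠ δ in 𝓝[>] (0 : ℝ), ∀ i ∈ s, δ < f i :=
    (eventually_all_finset s).2 fun i hi =>
      eventually_nhdsWithin_of_eventually_nhds (eventually_lt_nhds (hf i hi))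
  obtain ⟨δ, hδf, hδ⟩ := (eventually_lt.and eventually_mem_nhdsWithin).exists
  obtain ⟨ε, hε, hεδ⟩ := exists_pos_rat_lt (Set.mem_Ioi.1 hδ)
  exact ⟨ε, hε, fun i hi => hεδ.trans (hδf i hi)⟩

theorem exists_nonneg_rat_lt_sum_sub_le (hf : ∀ i ∈ s, 0 < f i) {η : ℝ} (hη : 0 < η) :
    ∃ v : ι → ℚ, (∀ i ∈ s, 0 ≤ v i ∧ (v i : ℝ) < f i) ∧ ∑ i ∈ s, (f i - v i) ≤ η := by
  obtain rfl | hs := s.eq_empty_or_nonempty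
  · exact ⟨0, by simp, by simpa using hη.le⟩
  have card_pos : (0 : ℝ) < s.card := by exact_mod_cast hs.card_pos
  have exists_approx (i : ι) (hi : i ∈ s) :
      ∃ q : ℚ, (0 ≤ q ∧ (q : ℝ) < f i) ∧ f i - q ≤ η / s.card := by
    obtain ⟨q, hlq, hqf⟩ := exists_rat_btwn
      (max_lt (hf i hi) (sub_lt_self (f i) (div_pos hη card_pos)))
    obtain ⟨hq, hclose⟩ := max_lt_iff.1 hlq
    exact ⟨q, ⟨by exact_mod_cast hq.le, hqf⟩, by linarith⟩
  choose! v hv hclose using exists_approx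
  refine ⟨v, hv, ?_⟩
  calc ∑ i ∈ s, (f i - v i) ≤ s.card • (η / s.card) := s.sum_le_card_nsmul _ _ hclose
    _ = η := by rw [nsmul_eq_mul, mul_div_cancel₀ η card_pos.ne']

end RationalApproximation

namespace LDF

variable {μ : Measure (ℕ → Bool)} {T : Set (List Bool)} {d : LDF} {n : ℕ}

theorem denseIn_of_forall_lt (hdom : d.dom = level T n)
    (hlt : ∀ σ ∈ d.dom, (d.val σ : ℝ) < relMeasure μ σ (paths T)) : d.DenseIn μ T := by
  obtain ⟨ε, hε, hgap⟩ := exists_pos_rat_forall_lt d.dom fun σ hσ => sub_pos.2 (hlt σ hσ)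
  exact ⟨ε, hε, ⟨n, fun σ => hdom ▸ mem_level⟩,
    fun σ hσ => (lt_sub_iff_add_lt'.1 (hgap σ hσ)).le⟩

theorem DenseIn.exists_dom_eq_level (hd : d.DenseIn μ T) : ∃ l, d.dom = level T l := by
  obtain ⟨-, -, ⟨l, hl⟩, -⟩ := hd
  exact ⟨l, Finset.ext fun σ => (hl σ).trans mem_level.symm⟩

theorem DenseIn.exists_extends_dom_eq_level (hd : d.DenseIn μ T) (hT : IsTree T)
    (hpos : StronglyPositive μ T) {l : ℕ} (hdom : d.dom = level T l) (hln : l ≤ n) :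
    ∃ e : LDF, e.dom = level T n ∧ e.Extends d ∧ e.DenseIn μ T := by
  obtain ⟨ε, hε, -, hgap⟩ := hd
  have mem_dom {σ : List Bool} : σ ∈ d.dom ↔ σ ∈ T ∧ σ.length = l := hdom ▸ mem_level
  have length_le {σ : List Bool} (hσ : σ ∈ d.dom) : σ.length ≤ n := (mem_dom.1 hσ).2.trans_le hln
  have exists_above (σ : List Bool) (hσ : σ ∈ d.dom) : ∃ τ ∈ level T n, σ <+: τ :=
    hpos.exists_prefix_mem_level (mem_dom.1 hσ).1 (length_le hσ)
  obtain ⟨ρ, hρ⟩ := d.dom_nonempty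
  have finite_mass : μ (paths T) ≠ ⊤ :=
    hpos.measure_paths_ne_top (hT ρ (mem_dom.1 hρ).1 [] List.nil_prefix)
  obtain ⟨v, hv, hloss⟩ := exists_nonneg_rat_lt_sum_sub_le (level T n)
    (fun τ hτ => hpos τ (mem_level.1 hτ).1) (Rat.cast_pos.2 hε)
  let e : LDF :=
    { dom := level T n
      val := v
      dom_nonempty := (exists_above ρ hρ).imp fun _ => And.left
      nonneg := fun τ hτ => (hv τ hτ).1
      eq_length := fun σ hσ τ hτ => (mem_level.1 hσ).2.trans (mem_level.1 hτ).2.symm }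
  refine ⟨e, rfl, ⟨fun τ hτ => ?_, exists_above, fun σ hσ => ?_⟩,
    denseIn_of_forall_lt rfl fun τ hτ => (hv τ hτ).2⟩
  · obtain ⟨hτT, hτn⟩ := mem_level.1 hτ
    exact ⟨τ.take l,
      mem_dom.2 ⟨hT τ hτT _ (τ.take_prefix l), List.length_take_of_le (hτn ▸ hln)⟩,
      τ.take_prefix l⟩
  · exact mul_inv_two_pow_le_sum_level_of_sum_sub_le finite_mass (length_le hσ) (hgap σ hσ)
      (fun τ hτ => (hv τ hτ).2.le) hloss

end LDF

theorem branching_general {μ : Measure (ℕ → Bool)} [NullSingletonClass μ] (p : Cond μ) :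
    ∃ q : Cond μ, q.Extends p ∧
      ∀ σ ∈ p.d.dom, ∃ τ₁ ∈ q.d.dom, ∃ τ₂ ∈ q.d.dom,
        σ <+: τ₁ ∧ σ <+: τ₂ ∧ ¬ τ₁ <+: τ₂ ∧ ¬ τ₂ <+: τ₁ := by
  obtain ⟨l, hl⟩ := p.dense.exists_dom_eq_level
  have mem_tree (σ : List Bool) (hσ : σ ∈ p.d.dom) : σ ∈ p.T := (mem_level.1 (hl ▸ hσ)).1
  have eventually_branching := (eventually_all_finset p.d.dom).2 fun σ hσ =>
    eventually_exists_incomparable_mem_level (p.strongPos.measure_ne_zero (mem_tree σ hσ))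
  obtain ⟨n, hln, hn⟩ := ((eventually_ge_atTop l).and eventually_branching).exists
  obtain ⟨e, he, hext, hdense⟩ :=
    p.dense.exists_extends_dom_eq_level p.tree p.strongPos hl hln
  exact ⟨⟨e, p.T, p.tree, p.infinite, hdense, p.strongPos⟩, ⟨hext, subset_rfl⟩, he ▸ hn⟩

/-- **Branching.**
Every forcing condition `p = (F_p, T_p, d_p)` can be extended to a condition
`q = (F_q, T_q, d_q)` such that every string in `F_p` has at least two
incomparable extensions in `F_q`.
(`μ` is the fair-coin measure, characterized by its values on cylinders.) -/
theorem branching (μ : Measure (ℕ → Bool))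
    (hμ : ∀ σ : List Bool, μ (cyl σ) = (2 : ENNReal)⁻¹ ^ σ.length)
    (p : Cond μ) :
    ∃ q : Cond μ, q.Extends p ∧
      ∀ σ ∈ p.d.dom, ∃ τ₁ ∈ q.d.dom, ∃ τ₂ ∈ q.d.dom,
        σ <+: τ₁ ∧ σ <+: τ₂ ∧ ¬ τ₁ <+: τ₂ ∧ ¬ τ₂ <+: τ₁ := by
  have := nullSingletonClass_of_measure_cyl hμ
  exact branching_general p
end
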